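/- Let n and k be integers with ⌊n/2⌋ + 1 ≤ k ≤ n − 1, and let G be any clique tree on n vertices with zero forcing number k in which every block has at least 3 vertices. Then ρ(G) ≤ ρ(𝒢(n,k)), and equality holds if and only if G is isomorphic to 𝒢(n,k). -/

import Mathlib

open Classical

/-- The set of vertices eventually forced blue, starting from the blue set `S`,
under the color-change rule: a blue vertex with exactly one non-blue neighbor
forces that neighbor. -/
inductive SimpleGraph.Forced {V : Type*} (G : SimpleGraph V) (S : Set V) : V → Prop
  | init (v : V) (hv : v ∈ S) : SimpleGraph.Forced G S v
  | force (u w : V) (hu : SimpleGraph.Forced G S u) (hadj : G.Adj u w)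
      (hothers : ∀ y, G.Adj u y → y ≠ w → SimpleGraph.Forced G S y) :
      SimpleGraph.Forced G S w

/-- `S` is a zero forcing set of `G` if starting from `S` blue, every vertex
eventually becomes blue. -/
def SimpleGraph.IsZeroForcingSet {V : Type*} (G : SimpleGraph V) (S : Set V) : Prop :=
  ∀ v, G.Forced S v

/-- The zero forcing number `Z(G)`: the least size of a zero forcing set. -/
noncomputable def SimpleGraph.zeroForcingNumber {V : Type*} (G : SimpleGraph V) : ℕ :=
  sInf {n | ∃ S : Set V, S.ncard = n ∧ G.IsZeroForcingSet S}

/-- The induced subgraph of `G` on `B` is connected and has no cut vertex. -/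
def SimpleGraph.IsConnectedNoCutVertexSet {V : Type*} (G : SimpleGraph V) (B : Set V) : Prop :=
  (G.induce B).Connected ∧ ∀ v ∈ B, B \ {v} = ∅ ∨ (G.induce (B \ {v})).Connected

/-- `B` is (the vertex set of) a block of `G`: a maximal connected subgraph
without cut vertices. -/
def SimpleGraph.IsBlock {V : Type*} (G : SimpleGraph V) (B : Set V) : Prop :=
  G.IsConnectedNoCutVertexSet B ∧
    ∀ C, B ⊆ C → G.IsConnectedNoCutVertexSet C → B = C

/-- `v` is a cut vertex of `G`: `G` is connected but `G - v` is not. -/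
def SimpleGraph.IsCutVertex {V : Type*} (G : SimpleGraph V) (v : V) : Prop :=
  G.Connected ∧ ¬ (G.induce ({v}ᶜ : Set V)).Connected

/-- A clique tree: a connected graph each of whose blocks is a clique. -/
def SimpleGraph.IsCliqueTree {V : Type*} (G : SimpleGraph V) : Prop :=
  G.Connected ∧ ∀ B : Set V, G.IsBlock B → G.IsClique B

/-- The real adjacency matrix of a graph. -/
noncomputable def SimpleGraph.adjMatR {V : Type*} [Fintype V] (G : SimpleGraph V) :
    Matrix V V ℝ :=
  Matrix.of fun i j => if G.Adj i j then (1 : ℝ) else 0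

/-- The spectral radius of a (connected) graph: the largest real eigenvalue of
its adjacency matrix. -/
noncomputable def SimpleGraph.specRad {V : Type*} [Fintype V] (G : SimpleGraph V) : ℝ :=
  sSup {t : ℝ | ∃ x : V → ℝ, x ≠ 0 ∧ G.adjMatR.mulVec x = t • x}

/-- The clique tree `𝒢(n,k)` on vertex set `Fin n`: one block `K_{2k-n+2}`
(on the vertices `0, 1, …, 2k-n+1`) and `n-k-1` triangle blocks (on the vertex
`0` together with the pairs `{2k-n+2i, 2k-n+1+2i}` for `1 ≤ i ≤ n-k-1`), all
sharing the single central cut vertex `0`. -/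
def calG (n k : ℕ) : SimpleGraph (Fin n) :=
  SimpleGraph.fromRel (fun i j =>
    (i.val = 0 ∨ j.val = 0) ∨
    (i.val ≤ 2 * k - n + 1 ∧ j.val ≤ 2 * k - n + 1) ∨
    (2 * k - n + 1 < i.val ∧ 2 * k - n + 1 < j.val ∧
      (i.val - (2 * k - n + 2)) / 2 = (j.val - (2 * k - n + 2)) / 2))

/-! Let `x` be the positive Perron vector of `G` and root `G` at a vertex `u` where `x` is largest.
Every block is a parent vertex together with a class of at least two vertices below it. Hanging all
of these classes from `u` instead does not decrease `xᵀAx`, and turns `G` into a union of cliques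
sharing `u`.

A force turns every block containing the forcing edge entirely blue, so `G` has at least `n - Z(G)`
blocks. Let `s` be the vector of sums of `x` over the classes; the edges inside the classes
contribute `‖s‖²` minus a constant to `xᵀAx`. Keep two vertices in each of `n - k - 1` classes other
than a heaviest one, and move all remaining vertices into the heaviest class: this does not decrease
`‖s‖²`, and the result is `𝒢(n,k)`. Hence `ρ(G) ≤ ρ(𝒢(n,k))` by the Rayleigh principle.

In case of equality `x` is an eigenvector of both graphs for the same eigenvalue; comparing the
eigenvector equations at `u` shows that `u` is adjacent to all other vertices of `G`, and `G` equals
the result because the second step strictly increases `‖s‖²` unless it moves nothing. -/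

section CliqueTree

open SimpleGraph

variable {V : Type*} {G : SimpleGraph V} {u : V}

lemma notMem_support_takeUntil_or_dropUntil {p a x v : V} {w : G.Walk p a} (hw : w.IsPath)
    (hx : x ∈ w.support) (hxv : x ≠ v) :
    v ∉ (w.takeUntil x hx).support ∨ v ∉ (w.dropUntil x hx).support := by
  by_contra! ⟨htake, hdrop⟩
  have hnodup := hw.support_nodup
  rw [← w.take_spec hx, Walk.support_append] at hnodup
  have htail := (Walk.mem_support_iff _).1 hdrop |>.resolve_left hxv.symm
  exact (List.nodup_append.1 hnodup).2.2 v htake v htail rfl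

lemma connected_induce_support_diff_singleton {p a v : V} {w : G.Walk p a} (hw : w.IsPath)
    (hpa : G.Adj p a) (hvp : v ≠ p) : (G.induce ({x | x ∈ w.support} \ {v})).Connected := by
  have patch {x : V} (q : G.Walk p x) (hq : q.support ⊆ w.support) (hvq : v ∉ q.support) :
      ∃ s ⊆ {x | x ∈ w.support} \ {v}, ∃ (hp : p ∈ s) (hx : x ∈ s),
        (G.induce s).Reachable ⟨p, hp⟩ ⟨x, hx⟩ :=
    ⟨{z | z ∈ q.support}, fun z hz => ⟨hq hz, fun h => hvq (h ▸ hz)⟩,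
      q.start_mem_support, q.end_mem_support, q.connected_induce_support.preconnected _ _⟩
  refine G.induce_connected_of_patches p ⟨w.start_mem_support, hvp.symm⟩ fun {x} ⟨hx, hxv⟩ => ?_
  rcases notMem_support_takeUntil_or_dropUntil hw hx hxv with hv | hv
  · exact patch _ (w.support_takeUntil_subset_support hx) hv
  · refine patch (Walk.cons hpa (w.dropUntil x hx).reverse) ?_ (by simp [hvp, hv])
    simpa using w.support_dropUntil_subset_support hx

lemma isConnectedNoCutVertexSet_support {p a : V} {w : G.Walk p a} (hw : w.IsPath)
    (hpa : G.Adj p a) : G.IsConnectedNoCutVertexSet {x | x ∈ w.support} := by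
  refine ⟨w.connected_induce_support, fun v _ => Or.inr ?_⟩
  by_cases hvp : v = p
  · subst hvp
    have hsupp : {x | x ∈ w.support} = {x | x ∈ w.reverse.support} := by simp
    rw [hsupp]
    exact connected_induce_support_diff_singleton hw.reverse hpa.symm hpa.ne
  · exact connected_induce_support_diff_singleton hw hpa hvp

lemma exists_isBlock_superset [Finite V] {C : Set V} (hC : G.IsConnectedNoCutVertexSet C) :
    ∃ B, C ⊆ B ∧ G.IsBlock B := by
  obtain ⟨B, hCB, hB⟩ := Finite.exists_le_maximal (p := G.IsConnectedNoCutVertexSet) hC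
  exact ⟨B, hCB, hB.prop, fun D hBD hD => hB.eq_of_le hD hBD⟩

lemma isClique_support [Finite V] (hG : G.IsCliqueTree) {p a : V} {w : G.Walk p a}
    (hw : w.IsPath) (hpa : G.Adj p a) : G.IsClique {x | x ∈ w.support} := by
  obtain ⟨B, hCB, hB⟩ := exists_isBlock_superset (isConnectedNoCutVertexSet_support hw hpa)
  exact (hG.2 B hB).subset hCB

lemma exists_common_neighbor [Finite V] (hG : G.IsCliqueTree)
    (hsize : ∀ B : Set V, G.IsBlock B → 3 ≤ B.ncard) {p a : V} (hpa : G.Adj p a) :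
    ∃ c, G.Adj p c ∧ G.Adj a c := by
  obtain ⟨B, hCB, hB⟩ := exists_isBlock_superset <|
    isConnectedNoCutVertexSet_support (Walk.IsPath.of_adj hpa) hpa
  have hp : p ∈ B := hCB (by simp)
  have ha : a ∈ B := hCB (by simp)
  obtain ⟨c, hc, hcpa⟩ : ∃ c ∈ B, c ∉ ({p, a} : Set V) :=
    Set.exists_mem_notMem_of_ncard_lt_ncard <|
      (Set.ncard_pair hpa.ne).trans_lt (hsize B hB)
  simp only [Set.mem_insert_iff, Set.mem_singleton_iff, not_or] at hcpa
  exact ⟨c, hG.2 B hB hp hc (Ne.symm hcpa.1), hG.2 B hB ha hc (Ne.symm hcpa.2)⟩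

lemma dist_le_dist_add_one_of_adj {a b : V} (h : G.Adj a b) : G.dist u a ≤ G.dist u b + 1 := by
  have := h.symm.diff_dist_adj (u := u)
  omega

/-- In `G` rooted at `u`, the vertex `p` is a neighbor of `a` one step closer to the root. -/
def IsParent (G : SimpleGraph V) (u p a : V) : Prop :=
  G.Adj p a ∧ G.dist u a = G.dist u p + 1

lemma exists_isParent (hG : G.Connected) {a : V} (ha : a ≠ u) : ∃ p, IsParent G u p a := by
  obtain ⟨w, hw⟩ := hG.exists_walk_length_eq_dist a u
  cases w with
  | nil => exact absurd rfl ha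
  | @cons _ p _ h q =>
    refine ⟨p, h.symm, le_antisymm (dist_le_dist_add_one_of_adj h) ?_⟩
    rw [dist_comm, dist_comm (u := u), ← hw, Walk.length_cons]
    exact Nat.add_le_add_right (dist_le q) 1

lemma exists_isPath_forall_dist_le (hG : G.Connected) {p q : V} {d : ℕ}
    (hp : G.dist u p ≤ d) (hq : G.dist u q ≤ d) :
    ∃ w : G.Walk p q, w.IsPath ∧ ∀ x ∈ w.support, G.dist u x ≤ d := by
  have to_root {v : V} (hv : G.dist u v ≤ d) :
      ∃ w : G.Walk u v, ∀ x ∈ w.support, G.dist u x ≤ d := by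
    obtain ⟨w, hw⟩ := hG.exists_walk_length_eq_dist u v
    exact ⟨w, fun x hx => (dist_le (w.takeUntil x hx)).trans <|
      (w.length_takeUntil_le_length hx).trans (hw.trans_le hv)⟩
  obtain ⟨w₁, h₁⟩ := to_root hp
  obtain ⟨w₂, h₂⟩ := to_root hq
  refine ⟨(w₁.reverse.append w₂).bypass, Walk.bypass_isPath _, fun x hx => ?_⟩
  have hx := Walk.support_bypass_subset_support _ hx
  rw [Walk.mem_support_append_iff, Walk.support_reverse, List.mem_reverse] at hx
  exact hx.elim (h₁ x) (h₂ x)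

lemma exists_isPath_through_lower_level (hG : G.Connected) {p q : V} (hpq : p ≠ q)
    (hd : G.dist u p = G.dist u q) :
    ∃ p', G.dist u p = G.dist u p' + 1 ∧ ∃ w : G.Walk p q, w.IsPath ∧ p' ∈ w.support ∧
      ∀ x ∈ w.support, G.dist u x ≤ G.dist u p := by
  have hpu : p ≠ u := by
    rintro rfl
    exact hpq (hG.dist_eq_zero_iff.1 (hd ▸ dist_self))
  have hqu : q ≠ u := by
    rintro rfl
    exact hpq (hG.dist_eq_zero_iff.1 (hd.trans dist_self)).symm
  obtain ⟨p', hp', hpp'⟩ := exists_isParent hG hpu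
  obtain ⟨q', hq', hqq'⟩ := exists_isParent hG hqu
  obtain ⟨w, hw, hwd⟩ := exists_isPath_forall_dist_le hG (u := u) (le_refl (G.dist u p'))
    (show G.dist u q' ≤ _ by omega)
  have hpw : p ∉ w.support := fun h => by have := hwd p h; omega
  have hqw : q ∉ w.support := fun h => by have := hwd q h; omega
  refine ⟨p', hpp', (w.cons hp'.symm).concat hq', ?_, ?_, fun x hx => ?_⟩
  · exact (hw.cons hpw).concat (by simp [hpq.symm, hqw]) _
  · simp [Walk.support_concat]
  · rw [Walk.support_concat, Walk.support_cons] at hx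
    simp only [List.mem_append, List.mem_cons, List.not_mem_nil, or_false] at hx
    rcases hx with (rfl | hx) | rfl
    · exact le_rfl
    · have := hwd x hx
      omega
    · exact hd.ge

/-- Two distinct parents would lie, together with `a` and a vertex two levels above `a`, on a
cycle, hence in a clique. -/
lemma IsParent.eq_of_eq_or_adj [Finite V] (hG : G.IsCliqueTree) {a b p q : V}
    (hp : IsParent G u p a) (hq : IsParent G u q b) (hd : G.dist u a = G.dist u b)
    (hab : a = b ∨ G.Adj a b) : p = q := by
  by_contra hpq
  obtain ⟨hpa, hap⟩ := hp
  obtain ⟨hqb, hbq⟩ := hq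
  obtain ⟨p', hpp', w, hw, hp'w, hwd⟩ := exists_isPath_through_lower_level hG.1 (u := u) hpq
    (by omega)
  have hlow : ∀ x ∈ w.support, G.dist u x < G.dist u a := fun x hx => by
    have := hwd x hx
    omega
  have ha : a ∉ w.support := fun h => (hlow a h).false
  have hb : b ∉ w.support := fun h => (hlow b h).ne hd.symm
  have hap' : a ≠ p' := fun h => ha (h ▸ hp'w)
  suffices hadj : G.Adj a p' by
    have := dist_le_dist_add_one_of_adj (u := u) hadj
    omega
  rcases hab with rfl | hab
  · exact isClique_support hG (hw.concat ha hqb) hpa (by simp)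
      (by simp [Walk.support_concat, hp'w]) hap'
  · refine isClique_support hG ((hw.concat hb hqb).concat ?_ hab.symm) hpa (by simp)
      (by simp [Walk.support_concat, hp'w]) hap'
    simp [Walk.support_concat, ha, hab.ne]

lemma adj_of_adj_of_adj_of_dist_eq [Finite V] (hG : G.IsCliqueTree) {a b c : V}
    (hab : G.Adj a b) (hbc : G.Adj b c) (hdab : G.dist u a = G.dist u b)
    (hdbc : G.dist u b = G.dist u c) (hac : a ≠ c) : G.Adj a c := by
  have ne_root {x y : V} (hxy : G.Adj x y) (hd : G.dist u x = G.dist u y) : x ≠ u := by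
    rintro rfl
    exact hxy.ne (hG.1.dist_eq_zero_iff.1 (hd ▸ dist_self))
  obtain ⟨p, hp⟩ := exists_isParent hG.1 (ne_root hab hdab)
  obtain ⟨r, hr⟩ := exists_isParent hG.1 (ne_root hbc hdbc)
  obtain ⟨q, hq⟩ := exists_isParent hG.1 (ne_root hbc.symm hdbc.symm)
  obtain rfl := hp.eq_of_eq_or_adj hG hr hdab (Or.inr hab)
  obtain rfl := hr.eq_of_eq_or_adj hG hq hdbc (Or.inr hbc)
  have hbp : b ≠ p := by
    rintro rfl
    exact absurd hr.2 (Nat.lt_succ_self _).ne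
  have hpath : (Walk.cons hab (Walk.cons hbc (Walk.cons hq.1.symm Walk.nil))).IsPath := by
    simp [hab.ne, hac, hbc.ne, hbp, hp.1.ne', hq.1.ne']
  exact isClique_support hG hpath hp.1.symm (by simp) (by simp) hac

/-- The siblings of `a` in `G` rooted at `u`, with `a` itself included: for a clique tree, the
vertices other than the parent of `a` in the block joining `a` to its parent. -/
def siblings (G : SimpleGraph V) (u a : V) : Set V :=
  {x | G.dist u x = G.dist u a ∧ (x = a ∨ G.Adj x a)}

lemma siblings_eq_iff [Finite V] (hG : G.IsCliqueTree) {a b : V} :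
    siblings G u a = siblings G u b ↔ G.dist u a = G.dist u b ∧ (a = b ∨ G.Adj a b) := by
  have subset {a b : V} (hd : G.dist u a = G.dist u b) (hab : G.Adj a b) :
      siblings G u a ⊆ siblings G u b := by
    rintro x ⟨hx, rfl | hxa⟩
    · exact ⟨hd, Or.inr hab⟩
    · exact ⟨hx.trans hd, or_iff_not_imp_left.2 (adj_of_adj_of_adj_of_dist_eq hG hxa hab hx hd)⟩
  constructor
  · intro h
    have ha : a ∈ siblings G u a := ⟨rfl, Or.inl rfl⟩
    rwa [h] at ha
  · rintro ⟨hd, rfl | hab⟩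
    · rfl
    · exact (subset hd hab).antisymm (subset hd.symm hab.symm)

lemma exists_sibling_ne [Finite V] (hG : G.IsCliqueTree)
    (hsize : ∀ B : Set V, G.IsBlock B → 3 ≤ B.ncard) {a : V} (ha : a ≠ u) :
    ∃ b ≠ a, siblings G u b = siblings G u a := by
  obtain ⟨p, hp⟩ := exists_isParent hG.1 ha
  obtain ⟨b, hpb, hab⟩ := exists_common_neighbor hG hsize hp.1
  refine ⟨b, hab.ne', (siblings_eq_iff hG).2 ⟨?_, Or.inr hab.symm⟩⟩
  by_contra hd
  have hab_le := dist_le_dist_add_one_of_adj (u := u) hab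
  have hba_le := dist_le_dist_add_one_of_adj (u := u) hab.symm
  have hbp_le := dist_le_dist_add_one_of_adj (u := u) hpb.symm
  have hb : IsParent G u b a := ⟨hab.symm, by have := hp.2; omega⟩
  exact hpb.ne (hp.eq_of_eq_or_adj hG hb rfl (Or.inl rfl))

/-- A partition of the edges of `G`, rooted at `u`, into cliques, each of which consists of a
parent vertex and a class of at least two vertices below it. Classes are labelled by sets of
vertices; the value `par u` is irrelevant. -/
structure RootedCliqueDecomposition (G : SimpleGraph V) (u : V) where
  cls : V → Set V
  par : V → V
  adj_iff : ∀ a b, G.Adj a b ↔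
    (a ≠ b ∧ cls a = cls b) ∨ (b ≠ u ∧ par b = a) ∨ (a ≠ u ∧ par a = b)
  eq_root_of_cls_eq : ∀ {a}, cls a = cls u → a = u
  par_eq_of_cls_eq : ∀ {a b}, cls a = cls b → par a = par b
  exists_twin : ∀ {a}, a ≠ u → ∃ b ≠ a, cls b = cls a

theorem nonempty_rootedCliqueDecomposition [Finite V] (hG : G.IsCliqueTree)
    (hsize : ∀ B : Set V, G.IsBlock B → 3 ≤ B.ncard) (u : V) :
    Nonempty (RootedCliqueDecomposition G u) := by
  have hex (a : V) : ∃ p, a ≠ u → IsParent G u p a := by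
    by_cases ha : a = u
    · exact ⟨u, fun h => absurd ha h⟩
    · exact (exists_isParent hG.1 ha).imp fun p hp _ => hp
  choose par hpar using hex
  have ne_root {p a : V} (h : IsParent G u p a) : a ≠ u := by
    rintro rfl
    exact absurd (h.2.symm.trans dist_self) (Nat.succ_ne_zero _)
  have par_eq_iff {p a : V} : a ≠ u ∧ par a = p ↔ IsParent G u p a :=
    ⟨fun ⟨ha, h⟩ => h ▸ hpar a ha, fun h => ⟨ne_root h,
      (hpar a (ne_root h)).eq_of_eq_or_adj hG h rfl (Or.inl rfl)⟩⟩
  have eq_root {a : V} (h : siblings G u a = siblings G u u) : a = u := by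
    have hd := ((siblings_eq_iff hG).1 h).1
    exact (hG.1.dist_eq_zero_iff.1 (hd.trans dist_self)).symm
  refine ⟨⟨siblings G u, par, fun a b => ?_, eq_root, fun {a b} h => ?_,
    exists_sibling_ne hG hsize⟩⟩
  · rw [par_eq_iff, par_eq_iff, siblings_eq_iff hG]
    constructor
    · intro h
      have hab_le := dist_le_dist_add_one_of_adj (u := u) h
      have hba_le := dist_le_dist_add_one_of_adj (u := u) h.symm
      rcases lt_trichotomy (G.dist u a) (G.dist u b) with hd | hd | hd
      · exact Or.inr (Or.inl ⟨h, by omega⟩)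
      · exact Or.inl ⟨h.ne, hd, Or.inr h⟩
      · exact Or.inr (Or.inr ⟨h.symm, by omega⟩)
    · rintro (⟨hab, -, h⟩ | h | h)
      exacts [h.resolve_left hab, h.1, h.1.symm]
  · by_cases ha : a = u
    · rw [ha, eq_root (h.symm.trans (by rw [ha]))]
    · have hb : b ≠ u := fun hb => ha (eq_root (h.trans (by rw [hb])))
      obtain ⟨hd, hab⟩ := (siblings_eq_iff hG).1 h
      exact (hpar a ha).eq_of_eq_or_adj hG (hpar b hb) hd hab

end CliqueTree

section ZeroForcing

open SimpleGraph
open scoped Finset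

variable {V : Type*} {G : SimpleGraph V}

lemma exists_force {S B : Set V} (hS : G.IsZeroForcingSet S) (hSB : S ⊆ B) (hB : B ≠ Set.univ) :
    ∃ u ∈ B, ∃ w ∉ B, G.Adj u w ∧ ∀ y, G.Adj u y → y ≠ w → y ∈ B := by
  by_contra! hstuck
  refine hB (Set.eq_univ_of_forall fun v => ?_)
  induction hS v with
  | init v hv => exact hSB hv
  | force u w _ huw _ hu hothers =>
    by_contra hw
    obtain ⟨y, huy, hyw, hy⟩ := hstuck u hu w hw huw
    exact hy (hothers y huy hyw)

/-- Any clique containing the edge of a force becomes entirely blue by that force, so the number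
of blue vertices grows no faster than the number of blue cliques. -/
lemma card_add_card_blue_cliques_le [Fintype V] {ι : Type*} {s : Finset ι} {B : ι → Set V}
    (hclique : ∀ i ∈ s, G.IsClique (B i)) (hcover : ∀ a b, G.Adj a b → ∃ i ∈ s, a ∈ B i ∧ b ∈ B i)
    {S blue : Set V} (hS : G.IsZeroForcingSet S) (hblue : S ⊆ blue) :
    Fintype.card V + #{i ∈ s | B i ⊆ blue} ≤ blue.ncard + #s := by
  induction blue using WellFoundedGT.induction with
  | ind blue ih =>
    by_cases huniv : blue = Set.univ
    · simp [huniv, Set.ncard_univ]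
    obtain ⟨u, hu, w, hw, huw, hothers⟩ := exists_force hS hblue huniv
    obtain ⟨i, hi, hui, hwi⟩ := hcover u w huw
    have hcompleted : B i ⊆ insert w blue := fun y hy => by
      by_cases hyu : y = u
      · exact Or.inr (hyu ▸ hu)
      · exact or_iff_not_imp_left.2 (hothers y (hclique i hi hui hy (Ne.symm hyu)))
    have hgrow : {j ∈ s | B j ⊆ blue} ⊂ {j ∈ s | B j ⊆ insert w blue} := by
      refine (Finset.ssubset_iff_of_subset ?_).2
        ⟨i, Finset.mem_filter.2 ⟨hi, hcompleted⟩, fun h => hw ((Finset.mem_filter.1 h).2 hwi)⟩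
      exact Finset.monotone_filter_right s fun j _ hj => hj.trans (Set.subset_insert w blue)
    have hnext := ih (insert w blue) (Set.ssubset_insert hw)
      (hblue.trans (Set.subset_insert w blue))
    rw [Set.ncard_insert_of_notMem hw] at hnext
    have := Finset.card_lt_card hgrow
    omega

lemma exists_isZeroForcingSet_ncard_eq (G : SimpleGraph V) :
    ∃ S : Set V, S.ncard = G.zeroForcingNumber ∧ G.IsZeroForcingSet S :=
  Nat.sInf_mem (s := {n | ∃ S : Set V, S.ncard = n ∧ G.IsZeroForcingSet S})
    ⟨_, Set.univ, rfl, fun v => .init v trivial⟩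

lemma card_le_zeroForcingNumber_add_card [Fintype V] {ι : Type*} {s : Finset ι} {B : ι → Set V}
    (hclique : ∀ i ∈ s, G.IsClique (B i))
    (hcover : ∀ a b, G.Adj a b → ∃ i ∈ s, a ∈ B i ∧ b ∈ B i) :
    Fintype.card V ≤ G.zeroForcingNumber + #s := by
  obtain ⟨S, hcard, hS⟩ := exists_isZeroForcingSet_ncard_eq G
  have := card_add_card_blue_cliques_le hclique hcover hS subset_rfl
  omega

namespace RootedCliqueDecomposition

variable {u : V} (R : RootedCliqueDecomposition G u)

lemma ne_root_of_cls_eq {a b : V} (h : R.cls a = R.cls b) (hab : a ≠ b) : a ≠ u := by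
  rintro rfl
  exact hab (R.eq_root_of_cls_eq h.symm).symm

lemma exists_twin_ne_root {a : V} (ha : a ≠ u) : ∃ b ≠ a, b ≠ u ∧ R.cls b = R.cls a := by
  obtain ⟨b, hba, hb⟩ := R.exists_twin ha
  exact ⟨b, hba, R.ne_root_of_cls_eq hb hba, hb⟩

variable [Fintype V]

/-- The classes of non-root vertices, one for each clique of the decomposition. -/
noncomputable def classes : Finset (Set V) :=
  (Finset.univ.erase u).image R.cls

variable {R} in
lemma cls_mem_classes {a : V} (ha : a ≠ u) : R.cls a ∈ R.classes :=
  Finset.mem_image_of_mem _ (Finset.mem_erase.2 ⟨ha, Finset.mem_univ a⟩)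

lemma two_mul_card_classes_lt : 2 * #R.classes < Fintype.card V := by
  have hfiber : ∀ C ∈ R.classes, 2 ≤ #{a ∈ Finset.univ.erase u | R.cls a = C} := by
    intro C hC
    obtain ⟨a, ha, rfl⟩ := Finset.mem_image.1 hC
    have hau := Finset.ne_of_mem_erase ha
    obtain ⟨b, hba, hbu, hb⟩ := R.exists_twin_ne_root hau
    exact Finset.one_lt_card.2 ⟨a, by simp [hau], b, by simp [hbu, hb], hba.symm⟩
  calc 2 * #R.classes ≤ #(Finset.univ.erase u) := Finset.mul_card_image_le_card _ 2 hfiber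
    _ < Fintype.card V := Finset.card_lt_univ_of_notMem (Finset.notMem_erase u _)

lemma card_le_zeroForcingNumber_add_card_classes :
    Fintype.card V ≤ G.zeroForcingNumber + #R.classes := by
  let clique (C : Set V) : Set V := {v | (∃ a ≠ u, R.cls a = C ∧ R.par a = v) ∨ v ≠ u ∧ R.cls v = C}
  refine card_le_zeroForcingNumber_add_card (B := clique) (fun C _ => ?_) fun a b hab => ?_
  · rintro v (⟨a, -, rfl, rfl⟩ | ⟨hv, rfl⟩) w (⟨b, -, hbC, rfl⟩ | ⟨hw, hwC⟩) hvw
    · exact absurd (R.par_eq_of_cls_eq hbC.symm) hvw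
    · exact (R.adj_iff _ _).2 (Or.inr (Or.inl ⟨hw, R.par_eq_of_cls_eq hwC⟩))
    · exact (R.adj_iff _ _).2 (Or.inr (Or.inr ⟨hv, R.par_eq_of_cls_eq hbC.symm⟩))
    · exact (R.adj_iff _ _).2 (Or.inl ⟨hvw, hwC.symm⟩)
  · rcases (R.adj_iff a b).1 hab with ⟨hne, hcls⟩ | ⟨hb, hpar⟩ | ⟨ha, hpar⟩
    · have hau := R.ne_root_of_cls_eq hcls hne
      have hbu := R.ne_root_of_cls_eq hcls.symm hne.symm
      exact ⟨R.cls a, cls_mem_classes hau, Or.inr ⟨hau, rfl⟩, Or.inr ⟨hbu, hcls.symm⟩⟩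
    · exact ⟨R.cls b, cls_mem_classes hb, Or.inl ⟨b, hb, rfl, hpar⟩, Or.inr ⟨hb, rfl⟩⟩
    · exact ⟨R.cls a, cls_mem_classes ha, Or.inr ⟨ha, rfl⟩, Or.inl ⟨a, ha, rfl, hpar⟩⟩

end RootedCliqueDecomposition

end ZeroForcing

section SpectralRadius

open SimpleGraph
open scoped Matrix

variable {V : Type*} [Fintype V]

lemma posSemidef_algebraMap_sub {A : Matrix V V ℝ} (hA : A.IsHermitian) {r : ℝ}
    (hr : ∀ t ∈ spectrum ℝ A, t ≤ r) : (algebraMap ℝ (Matrix V V ℝ) r - A).PosSemidef := by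
  have hB : (algebraMap ℝ (Matrix V V ℝ) r - A).IsHermitian := by
    rw [Algebra.algebraMap_eq_smul_one]
    exact (Matrix.isHermitian_one.smul (IsSelfAdjoint.all r)).sub hA
  refine hB.posSemidef_iff_eigenvalues_nonneg.2 fun i => ?_
  have hi := hB.eigenvalues_mem_spectrum_real i
  rw [← spectrum.singleton_sub_eq, Set.singleton_sub] at hi
  obtain ⟨t, ht, hti⟩ := hi
  exact (sub_nonneg.2 (hr t ht)).trans_eq hti

variable {G H : SimpleGraph V}

lemma adjMatR_eq_adjMatrix (G : SimpleGraph V) : G.adjMatR = G.adjMatrix ℝ :=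
  rfl

lemma isHermitian_adjMatR (G : SimpleGraph V) : G.adjMatR.IsHermitian := by
  rw [Matrix.IsHermitian, Matrix.conjTranspose_eq_transpose_of_trivial]
  exact G.transpose_adjMatrix

lemma specRad_eq_sSup_spectrum (G : SimpleGraph V) :
    G.specRad = sSup (spectrum ℝ G.adjMatR) := by
  unfold specRad
  congr 1
  ext t
  rw [Set.mem_ofPred_eq, ← Matrix.spectrum_toLin', ← Module.End.hasEigenvalue_iff_mem_spectrum]
  constructor
  · rintro ⟨x, hx, hxt⟩
    exact Module.End.hasEigenvalue_of_hasEigenvector (Module.End.hasEigenvector_iff.2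
      ⟨Module.End.mem_eigenspace_iff.2 hxt, hx⟩)
  · intro ht
    obtain ⟨x, hx⟩ := ht.exists_hasEigenvector
    exact ⟨x, hx.2, hx.apply_eq_smul⟩

lemma isGreatest_specRad [Nonempty V] (G : SimpleGraph V) :
    IsGreatest (spectrum ℝ G.adjMatR) G.specRad := by
  have hne : (spectrum ℝ G.adjMatR).Nonempty :=
    ⟨_, (isHermitian_adjMatR G).eigenvalues_mem_spectrum_real (Classical.arbitrary V)⟩
  rw [specRad_eq_sSup_spectrum]
  exact ⟨hne.csSup_mem Matrix.finite_real_spectrum,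
    fun t ht => le_csSup Matrix.finite_real_spectrum.bddAbove ht⟩

lemma exists_adjMatR_mulVec_eq_specRad_smul [Nonempty V] (G : SimpleGraph V) :
    ∃ x : V → ℝ, x ≠ 0 ∧ G.adjMatR *ᵥ x = G.specRad • x := by
  have h := (isGreatest_specRad G).1
  rw [← Matrix.spectrum_toLin', ← Module.End.hasEigenvalue_iff_mem_spectrum] at h
  obtain ⟨x, hx⟩ := h.exists_hasEigenvector
  exact ⟨x, hx.2, hx.apply_eq_smul⟩

lemma specRad_congr {W : Type*} [Fintype W] {H : SimpleGraph W} (e : G ≃g H) :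
    G.specRad = H.specRad := by
  have hH : H.adjMatR = Matrix.reindexAlgEquiv ℝ ℝ e.toEquiv G.adjMatR := by
    ext a b
    exact if_congr e.symm.map_adj_iff.symm rfl rfl
  rw [specRad_eq_sSup_spectrum, specRad_eq_sSup_spectrum, hH, AlgEquiv.spectrum_eq]

/-- The quadratic form of the adjacency matrix of `G`: twice the sum of `x a * x b` over the
edges `ab`. -/
noncomputable def adjForm (G : SimpleGraph V) (x : V → ℝ) : ℝ :=
  x ⬝ᵥ G.adjMatR *ᵥ x

lemma adjForm_eq_sum (G : SimpleGraph V) (x : V → ℝ) :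
    adjForm G x = ∑ a, ∑ b, if G.Adj a b then x a * x b else 0 :=
  dotProduct_mulVec_adjMatrix x x

lemma adjForm_eq_of_mulVec_eq {x : V → ℝ} {t : ℝ} (h : G.adjMatR *ᵥ x = t • x) :
    adjForm G x = t * (x ⬝ᵥ x) := by
  rw [adjForm, h, dotProduct_smul, smul_eq_mul]

lemma posSemidef_specRad_sub_adjMatR [Nonempty V] (G : SimpleGraph V) :
    (algebraMap ℝ (Matrix V V ℝ) G.specRad - G.adjMatR).PosSemidef :=
  posSemidef_algebraMap_sub (isHermitian_adjMatR G) fun _ ht => (isGreatest_specRad G).2 ht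

lemma dotProduct_algebraMap_sub_mulVec (G : SimpleGraph V) (r : ℝ) (x : V → ℝ) :
    star x ⬝ᵥ (algebraMap ℝ (Matrix V V ℝ) r - G.adjMatR) *ᵥ x = r * (x ⬝ᵥ x) - adjForm G x := by
  rw [star_trivial, Algebra.algebraMap_eq_smul_one, Matrix.sub_mulVec, Matrix.smul_mulVec,
    Matrix.one_mulVec, dotProduct_sub, dotProduct_smul, smul_eq_mul, adjForm]

lemma adjForm_le [Nonempty V] (G : SimpleGraph V) (x : V → ℝ) :
    adjForm G x ≤ G.specRad * (x ⬝ᵥ x) := by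
  have h := (posSemidef_specRad_sub_adjMatR G).dotProduct_mulVec_nonneg x
  rwa [dotProduct_algebraMap_sub_mulVec, sub_nonneg] at h

lemma mulVec_eq_of_adjForm_eq [Nonempty V] {x : V → ℝ}
    (h : adjForm G x = G.specRad * (x ⬝ᵥ x)) : G.adjMatR *ᵥ x = G.specRad • x := by
  have h0 := ((posSemidef_specRad_sub_adjMatR G).dotProduct_mulVec_zero_iff x).1 <| by
    rw [dotProduct_algebraMap_sub_mulVec, h, sub_self]
  rw [Matrix.sub_mulVec, Algebra.algebraMap_eq_smul_one, Matrix.smul_mulVec, Matrix.one_mulVec,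
    sub_eq_zero] at h0
  exact h0.symm

lemma eq_zero_of_adj {x : V → ℝ} (hx : ∀ v, 0 ≤ x v) {t : ℝ} (h : G.adjMatR *ᵥ x = t • x)
    {a b : V} (hab : G.Adj a b) (ha : x a = 0) : x b = 0 := by
  have hrow := congrFun h a
  rw [adjMatR_eq_adjMatrix, adjMatrix_mulVec_apply, Pi.smul_apply, ha, smul_zero,
    Finset.sum_eq_zero_iff_of_nonneg fun v _ => hx v] at hrow
  exact hrow b ((G.mem_neighborFinset a b).2 hab)

lemma pos_of_mulVec_eq_smul (hG : G.Connected) {x : V → ℝ} (hx0 : x ≠ 0) (hx : ∀ v, 0 ≤ x v)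
    {t : ℝ} (h : G.adjMatR *ᵥ x = t • x) (v : V) : 0 < x v := by
  refine (hx v).lt_of_ne' fun hv => hx0 (funext fun w => ?_)
  obtain ⟨p⟩ := hG.preconnected v w
  induction p with
  | nil => exact hv
  | cons hab _ ih => exact ih (eq_zero_of_adj hx h hab hv)

lemma exists_pos_eigenvector (hG : G.Connected) :
    ∃ x : V → ℝ, (∀ v, 0 < x v) ∧ G.adjMatR *ᵥ x = G.specRad • x := by
  have := hG.nonempty
  obtain ⟨y, hy0, hy⟩ := exists_adjMatR_mulVec_eq_specRad_smul G
  have hsq : (|y| ⬝ᵥ |y|) = y ⬝ᵥ y := by simp [dotProduct]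
  have hform : adjForm G y ≤ adjForm G |y| := by
    rw [adjForm_eq_sum, adjForm_eq_sum]
    refine Finset.sum_le_sum fun a _ => Finset.sum_le_sum fun b _ => ?_
    split_ifs
    · exact (le_abs_self _).trans_eq (abs_mul _ _)
    · exact le_rfl
  have habs : G.adjMatR *ᵥ |y| = G.specRad • |y| := by
    refine mulVec_eq_of_adjForm_eq ((adjForm_le G _).antisymm ?_)
    rw [hsq, ← adjForm_eq_of_mulVec_eq hy]
    exact hform
  have hne : |y| ≠ 0 := fun h => hy0 (funext fun v => abs_eq_zero.1 (congrFun h v))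
  exact ⟨|y|, pos_of_mulVec_eq_smul hG hne (fun v => abs_nonneg (y v)) habs, habs⟩

lemma dotProduct_self_pos {x : V → ℝ} (hx : x ≠ 0) : 0 < x ⬝ᵥ x :=
  (Finset.sum_nonneg fun v _ => mul_self_nonneg (x v)).lt_of_ne'
    (dotProduct_self_eq_zero.not.2 hx)

lemma specRad_le_of_adjForm_le {x : V → ℝ} (hx : x ≠ 0) (hG : G.adjMatR *ᵥ x = G.specRad • x)
    (h : adjForm G x ≤ adjForm H x) : G.specRad ≤ H.specRad := by
  have : Nonempty V := (Function.ne_iff.1 hx).nonempty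
  refine le_of_mul_le_mul_right ?_ (dotProduct_self_pos hx)
  rw [← adjForm_eq_of_mulVec_eq hG]
  exact h.trans (adjForm_le H x)

lemma mulVec_eq_of_specRad_eq {x : V → ℝ} (hG : G.adjMatR *ᵥ x = G.specRad • x)
    (h : adjForm G x ≤ adjForm H x) (heq : G.specRad = H.specRad) :
    G.adjMatR *ᵥ x = H.adjMatR *ᵥ x := by
  cases isEmpty_or_nonempty V
  · exact Subsingleton.elim _ _
  rw [hG, heq]
  refine (mulVec_eq_of_adjForm_eq ((adjForm_le H x).antisymm ?_)).symm
  rwa [← heq, ← adjForm_eq_of_mulVec_eq hG]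

lemma adj_of_mulVec_apply_eq {x : V → ℝ} (hx : ∀ v, 0 < x v) {u : V}
    (hGH : ∀ v, G.Adj u v → H.Adj u v) (h : (G.adjMatR *ᵥ x) u = (H.adjMatR *ᵥ x) u) {v : V}
    (hv : H.Adj u v) : G.Adj u v := by
  by_contra hGv
  simp only [adjMatR_eq_adjMatrix, adjMatrix_mulVec_apply] at h
  refine (Finset.sum_lt_sum_of_subset (i := v) (fun w hw => ?_) ?_ ?_ (hx v)
    fun w _ _ => (hx w).le).ne h
  · simpa using hGH w (by simpa using hw)
  · simpa using hv
  · simpa using hGv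

end SpectralRadius

section ClassWeights

open scoped Finset

variable {V ι : Type*} [Fintype V]

/-- The total weight of the class `i` of the labelling `c`, each vertex `v` having weight `y v`. -/
noncomputable def classWeight (c : V → ι) (y : V → ℝ) (i : ι) : ℝ :=
  ∑ v with c v = i, y v

/-- The sum of `y a * y b` over the ordered pairs of distinct vertices with the same label. -/
noncomputable def pairSum (c : V → ι) (y : V → ℝ) : ℝ :=
  ∑ a, ∑ b, if a ≠ b ∧ c a = c b then y a * y b else 0

lemma sum_mul_classWeight [Fintype ι] (s : ι → ℝ) (c : V → ι) (y : V → ℝ) :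
    ∑ i, s i * classWeight c y i = ∑ v, s (c v) * y v := by
  rw [← Finset.sum_fiberwise Finset.univ c]
  refine Finset.sum_congr rfl fun i _ => ?_
  rw [classWeight, Finset.mul_sum]
  refine Finset.sum_congr rfl fun v hv => ?_
  rw [(Finset.mem_filter.1 hv).2]

lemma sum_sq_classWeight [Fintype ι] (c : V → ι) (y : V → ℝ) :
    ∑ i, classWeight c y i ^ 2 = pairSum c y + ∑ v, y v ^ 2 := by
  simp_rw [sq]
  rw [sum_mul_classWeight, pairSum, ← Finset.sum_add_distrib]
  refine Finset.sum_congr rfl fun a _ => ?_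
  have hdiag : y a * y a = ∑ b, if a = b then y a * y b else 0 := by simp
  rw [hdiag, ← Finset.sum_add_distrib, classWeight, Finset.sum_mul, Finset.sum_filter]
  refine Finset.sum_congr rfl fun b _ => ?_
  by_cases hab : a = b
  · simp [hab]
  · simp [hab, eq_comm, mul_comm]

variable {c c' : V → ι} {y : V → ℝ} {i₀ : ι}

lemma classWeight_lt_of_moved (hy : ∀ v, 0 ≤ y v) (hmove : ∀ v, c' v = c v ∨ c' v = i₀) {v : V}
    (hv : 0 < y v) (hcv : c' v ≠ c v) : classWeight c y i₀ < classWeight c' y i₀ := by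
  have hv₀ : c' v = i₀ := (hmove v).resolve_left hcv
  refine Finset.sum_lt_sum_of_subset (i := v) (fun w hw => ?_) ?_ ?_ hv fun w _ _ => hy w
  · have hw : c w = i₀ := by simpa using hw
    simpa [hw] using hmove w
  · simpa using hv₀
  · simpa [← hv₀] using hcv.symm

/-- Since a heaviest class weighs at least as much as any other, `⟪s, s' - s⟫ ≥ 0` for the vectors
`s`, `s'` of class weights before and after the move. -/
lemma sum_sq_classWeight_add_le [Fintype ι] (hy : ∀ v, 0 ≤ y v)
    (hmove : ∀ v, c' v = c v ∨ c' v = i₀) (hmax : ∀ i, classWeight c y i ≤ classWeight c y i₀) :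
    ∑ i, classWeight c y i ^ 2 + ∑ i, (classWeight c' y i - classWeight c y i) ^ 2 ≤
      ∑ i, classWeight c' y i ^ 2 := by
  have hinner : ∑ i, classWeight c y i * classWeight c y i ≤
      ∑ i, classWeight c y i * classWeight c' y i := by
    rw [sum_mul_classWeight, sum_mul_classWeight]
    refine Finset.sum_le_sum fun v _ => mul_le_mul_of_nonneg_right ?_ (hy v)
    rcases hmove v with h | h
    · rw [h]
    · rw [h]
      exact hmax _
  have hexpand : ∑ i, classWeight c' y i ^ 2 - ∑ i, classWeight c y i ^ 2 =
      ∑ i, (classWeight c' y i - classWeight c y i) ^ 2 +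
      2 * (∑ i, classWeight c y i * classWeight c' y i -
        ∑ i, classWeight c y i * classWeight c y i) := by
    simp_rw [← Finset.sum_sub_distrib, Finset.mul_sum, ← Finset.sum_add_distrib]
    exact Finset.sum_congr rfl fun i _ => by ring
  linarith

lemma pairSum_le_of_moved [Finite ι] (hy : ∀ v, 0 ≤ y v) (hmove : ∀ v, c' v = c v ∨ c' v = i₀)
    (hmax : ∀ i, classWeight c y i ≤ classWeight c y i₀) : pairSum c y ≤ pairSum c' y := by
  have := Fintype.ofFinite ι
  have h := sum_sq_classWeight_add_le hy hmove hmax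
  have hdiff : 0 ≤ ∑ i, (classWeight c' y i - classWeight c y i) ^ 2 :=
    Finset.sum_nonneg fun i _ => sq_nonneg _
  rw [sum_sq_classWeight, sum_sq_classWeight] at h
  linarith

lemma eq_of_pairSum_eq_of_moved [Finite ι] (hy : ∀ v, 0 ≤ y v)
    (hmove : ∀ v, c' v = c v ∨ c' v = i₀) (hmax : ∀ i, classWeight c y i ≤ classWeight c y i₀)
    (heq : pairSum c y = pairSum c' y) {v : V} (hv : 0 < y v) : c' v = c v := by
  have := Fintype.ofFinite ι
  by_contra hcv
  have h := sum_sq_classWeight_add_le hy hmove hmax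
  have hi₀ : (classWeight c' y i₀ - classWeight c y i₀) ^ 2 ≤
      ∑ i, (classWeight c' y i - classWeight c y i) ^ 2 :=
    Finset.single_le_sum (f := fun i => (classWeight c' y i - classWeight c y i) ^ 2)
      (fun i _ => sq_nonneg _) (Finset.mem_univ i₀)
  have hpos := pow_pos (sub_pos.2 (classWeight_lt_of_moved hy hmove hv hcv)) 2
  rw [sum_sq_classWeight, sum_sq_classWeight] at h
  linarith

end ClassWeights

section Windmill

open SimpleGraph
open scoped Finset

variable {V W ι : Type*} {u : V}

/-- The windmill with center `u` whose blades are the classes of the labelling `c` off `u`: any two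
vertices with the same label are adjacent, and `u` is adjacent to all other vertices. The label of
`u` is irrelevant. -/
def windmill (u : V) (c : V → ι) : SimpleGraph V where
  Adj a b := a ≠ b ∧ (a = u ∨ b = u ∨ c a = c b)
  symm := ⟨fun a b h => by grind⟩
  loopless := ⟨fun a h => h.1 rfl⟩

lemma windmill_adj {c : V → ι} {a b : V} :
    (windmill u c).Adj a b ↔ a ≠ b ∧ (a = u ∨ b = u ∨ c a = c b) :=
  Iff.rfl

lemma windmill_congr {κ : Type*} {c : V → ι} {d : V → κ}
    (h : ∀ a ≠ u, ∀ b ≠ u, c a = c b ↔ d a = d b) : windmill u c = windmill u d := by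
  ext a b
  rw [windmill_adj, windmill_adj]
  by_cases ha : a = u
  · simp [ha]
  by_cases hb : b = u
  · simp [hb]
  simp [ha, hb, h a ha b hb]

lemma nonempty_windmill_iso_of_label_eq {c : V → ι} {w : W} {d : W → ι} (e : V ≃ W)
    (he : ∀ v, (if e v = w then none else some (d (e v))) = if v = u then none else some (c v)) :
    Nonempty (windmill u c ≃g windmill w d) := by
  have hcenter (v : V) : e v = w ↔ v = u := by grind
  have hlabel (v : V) (hv : v ≠ u) : d (e v) = c v := by grind
  refine ⟨⟨e, fun {a b} => ?_⟩⟩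
  simp only [windmill_adj, hcenter, e.injective.ne_iff]
  by_cases ha : a = u
  · simp [ha]
  by_cases hb : b = u
  · simp [hb]
  rw [hlabel a ha, hlabel b hb]

lemma exists_equiv_of_card_fiber {α β : Type*} [Fintype α] [Fintype β] [Finite ι]
    [DecidableEq ι] {f : α → ι} {g : β → ι} (hcard : Fintype.card α = Fintype.card β) (i₀ : ι)
    (hfiber : ∀ i ≠ i₀, #{a | f a = i} = #{b | g b = i}) : ∃ e : α ≃ β, ∀ a, g (e a) = f a := by
  have := Fintype.ofFinite ι
  have hsum : ∑ i, #{a | f a = i} = ∑ i, #{b | g b = i} := by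
    have hα := Finset.card_eq_sum_card_fiberwise (f := f) (s := Finset.univ) (t := Finset.univ)
      fun _ _ => Finset.mem_coe.2 (Finset.mem_univ _)
    have hβ := Finset.card_eq_sum_card_fiberwise (f := g) (s := Finset.univ) (t := Finset.univ)
      fun _ _ => Finset.mem_coe.2 (Finset.mem_univ _)
    exact hα.symm.trans (hcard.trans hβ)
  have hall (i : ι) : #{a | f a = i} = #{b | g b = i} := by
    by_cases hi : i = i₀
    · subst hi
      rw [← Finset.add_sum_erase _ _ (Finset.mem_univ i),
        ← Finset.add_sum_erase _ _ (Finset.mem_univ i),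
        Finset.sum_congr rfl fun j hj => hfiber j (Finset.ne_of_mem_erase hj)] at hsum
      exact Nat.add_right_cancel hsum
    · exact hfiber i hi
  have hequiv (i : ι) : Nonempty ({a // f a = i} ≃ {b // g b = i}) := by
    rw [← Fintype.card_eq, Fintype.card_subtype, Fintype.card_subtype, hall]
  exact ⟨Equiv.ofFiberEquiv fun i => (hequiv i).some, Equiv.ofFiberEquiv_map _⟩

/-- Every label `some i` is carried by exactly two vertices other than `u`, so that the blades of
`windmill u c` are a triangle for every `i` and one clique with the remaining vertices. -/
def HasPairFibers [Fintype V] (u : V) (c : V → Option ι) : Prop :=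
  ∀ i, #{v | v ≠ u ∧ c v = some i} = 2

lemma HasPairFibers.nonempty_windmill_iso [Fintype V] [Fintype W] [Finite ι]
    (hcard : Fintype.card V = Fintype.card W) {c : V → Option ι} (hc : HasPairFibers u c) {w : W}
    {d : W → Option ι} (hd : HasPairFibers w d) : Nonempty (windmill u c ≃g windmill w d) := by
  have hfiber : ∀ i ≠ some none, #{v | (if v = u then none else some (c v)) = i} =
      #{v | (if v = w then none else some (d v)) = i} := by
    rintro (_ | _ | i) hi
    · simp [Finset.card_filter]
    · exact absurd rfl hi
    · simpa [ite_eq_iff] using (hc i).trans (hd i).symm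
  obtain ⟨e, he⟩ := exists_equiv_of_card_fiber hcard (some none) hfiber
  exact nonempty_windmill_iso_of_label_eq e he

/-- The index of the triangle of `calG n k` containing a vertex, `none` for the vertices of the
large clique. -/
def calGLabel (n k : ℕ) (j : Fin n) : Option (Fin (n - k - 1)) :=
  if h : 0 < (j - (2 * k - n)) / 2 ∧ (j - (2 * k - n)) / 2 ≤ n - k - 1 then
    some ⟨(j - (2 * k - n)) / 2 - 1, by omega⟩
  else none

lemma calGLabel_eq_some_iff {n k : ℕ} {j : Fin n} {i : Fin (n - k - 1)} :
    calGLabel n k j = some i ↔ (j - (2 * k - n)) / 2 = i.val + 1 := by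
  rw [calGLabel]
  split_ifs with h
  · simp only [Option.some.injEq, Fin.ext_iff]
    omega
  · simp only [false_iff]
    omega

lemma calG_eq_windmill {n k : ℕ} [NeZero n] (hk : n ≤ 2 * k) :
    calG n k = windmill 0 (calGLabel n k) := by
  ext a b
  have ha := a.isLt
  have hb := b.isLt
  have hlabel : calGLabel n k a = calGLabel n k b ↔
      (a - (2 * k - n)) / 2 = (b - (2 * k - n)) / 2 := by
    unfold calGLabel
    split_ifs <;> simp <;> omega
  rw [calG, fromRel_adj, windmill_adj, hlabel]
  refine and_congr_right fun hab => ?_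
  simp only [Fin.ext_iff, Fin.val_zero] at hab ⊢
  omega

lemma hasPairFibers_calGLabel {n k : ℕ} [NeZero n] (hk : n ≤ 2 * k) :
    HasPairFibers 0 (calGLabel n k) := by
  intro i
  have hi := i.isLt
  refine Finset.card_eq_two.2 ⟨⟨2 * k - n + 2 * (i + 1), by omega⟩,
    ⟨2 * k - n + 2 * (i + 1) + 1, by omega⟩, by simp, ?_⟩
  ext j
  simp only [Finset.mem_filter, Finset.mem_univ, true_and, calGLabel_eq_some_iff, Finset.mem_insert,
    Finset.mem_singleton, Fin.ext_iff, ne_eq, Fin.val_zero]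
  omega

lemma HasPairFibers.nonempty_windmill_iso_calG [Fintype V] {k : ℕ} (hk : Fintype.card V ≤ 2 * k)
    {c : V → Option (Fin (Fintype.card V - k - 1))} (hc : HasPairFibers u c) :
    Nonempty (windmill u c ≃g calG (Fintype.card V) k) := by
  have : NeZero (Fintype.card V) := ⟨(Fintype.card_pos_iff.2 ⟨u⟩).ne'⟩
  rw [calG_eq_windmill hk]
  exact hc.nonempty_windmill_iso (by simp) (hasPairFibers_calGLabel hk)

/-- Choose two vertices from each of `m` of the classes other than `i₀` and move all other vertices
into `i₀`. -/
lemma exists_hasPairFibers [Fintype V] {c : V → ι}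
    (htwin : ∀ a ≠ u, ∃ b ≠ a, b ≠ u ∧ c b = c a) {m : ℕ}
    (hm : m < #((Finset.univ.erase u).image c)) (i₀ : ι) :
    ∃ (c' : V → Option (Fin m)) (e : Option (Fin m) ↪ ι), HasPairFibers u c' ∧
      ∀ v, e (c' v) = c v ∨ e (c' v) = i₀ := by
  obtain ⟨f⟩ : Nonempty (Fin m ↪ ((Finset.univ.erase u).image c).erase i₀) := by
    refine Function.Embedding.nonempty_of_card_le ?_
    rw [Fintype.card_fin, Fintype.card_coe]
    exact (Nat.le_sub_one_of_lt hm).trans Finset.pred_card_le_card_erase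
  have hf (i : Fin m) : ∃ a ≠ u, c a = f i := by
    simpa using Finset.mem_of_mem_erase (f i).2
  choose a hau ha using hf
  choose b hba hbu hb using fun i => htwin (a i) (hau i)
  have hinj {i j : Fin m} (h : (f i : ι) = f j) : i = j := f.injective (Subtype.ext h)
  have hpair {v : V} {i : Fin m} (hv : v = a i ∨ v = b i) : c v = f i := by
    rcases hv with rfl | rfl
    · exact ha i
    · rw [hb, ha]
  have hlabel (v : V) : ∃ o : Option (Fin m), ∀ i, o = some i ↔ v = a i ∨ v = b i := by
    by_cases h : ∃ i, v = a i ∨ v = b i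
    · obtain ⟨i, hi⟩ := h
      refine ⟨some i, fun j => ⟨?_, fun hj => ?_⟩⟩
      · rintro ⟨⟩
        exact hi
      · rw [hinj ((hpair hi).symm.trans (hpair hj))]
    · exact ⟨none, fun i => by simpa using not_exists.1 h i⟩
  choose c' hc' using hlabel
  refine ⟨c', (f.trans (Function.Embedding.subtype _)).optionElim i₀ ?_, fun i => ?_, fun v => ?_⟩
  · rintro ⟨i, hi⟩
    exact Finset.ne_of_mem_erase (f i).2 hi
  · refine Finset.card_eq_two.2 ⟨a i, b i, (hba i).symm, ?_⟩
    ext v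
    simp only [Finset.mem_filter, Finset.mem_univ, true_and, hc', Finset.mem_insert,
      Finset.mem_singleton, and_iff_right_iff_imp]
    rintro (rfl | rfl)
    exacts [hau i, hbu i]
  · cases h : c' v with
    | none => exact Or.inr rfl
    | some i => exact Or.inl (hpair ((hc' v i).1 h)).symm

lemma RootedCliqueDecomposition.eq_windmill {G : SimpleGraph V}
    (R : RootedCliqueDecomposition G u) (h : ∀ v ≠ u, G.Adj u v) : G = windmill u R.cls := by
  have hpar {b : V} (hb : b ≠ u) : R.par b = u := by
    rcases (R.adj_iff u b).1 (h b hb) with hcls | hpar | hpar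
    · exact absurd (R.eq_root_of_cls_eq hcls.2.symm) hb
    · exact hpar.2
    · exact absurd rfl hpar.1
  ext a b
  rw [windmill_adj]
  constructor
  · intro hab
    refine ⟨hab.ne, ?_⟩
    rcases (R.adj_iff a b).1 hab with hcls | ⟨hb, rfl⟩ | ⟨ha, rfl⟩
    · exact Or.inr (Or.inr hcls.2)
    · exact Or.inl (hpar hb)
    · exact Or.inr (Or.inl (hpar ha))
  · rintro ⟨hab, rfl | rfl | hcls⟩
    · exact h b hab.symm
    · exact (h a hab).symm
    · exact (R.adj_iff a b).2 (Or.inl ⟨hab, hcls⟩)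

lemma RootedCliqueDecomposition.ite_adj_le {G : SimpleGraph V} (R : RootedCliqueDecomposition G u)
    {x : V → ℝ} (hx : ∀ v, 0 ≤ x v) {y : V → ℝ} (hy : y = Function.update x u 0)
    (a b : V) :
    (if G.Adj a b then x a * x b else 0) ≤
      (if a ≠ b ∧ R.cls a = R.cls b then y a * y b else 0) +
        (if R.par b = a then x a * y b else 0) + if R.par a = b then x b * y a else 0 := by
  have hyx {v : V} (hv : v ≠ u) : y v = x v := by simp [hy, hv]
  have hy0 (v : V) : 0 ≤ y v := by
    by_cases hv : v = u
    · simp [hy, hv]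
    · exact (hx v).trans_eq (hyx hv).symm
  have hcls : 0 ≤ if a ≠ b ∧ R.cls a = R.cls b then y a * y b else 0 :=
    ite_nonneg (mul_nonneg (hy0 a) (hy0 b)) le_rfl
  have hparb : 0 ≤ if R.par b = a then x a * y b else 0 :=
    ite_nonneg (mul_nonneg (hx a) (hy0 b)) le_rfl
  have hpara : 0 ≤ if R.par a = b then x b * y a else 0 :=
    ite_nonneg (mul_nonneg (hx b) (hy0 a)) le_rfl
  by_cases hab : G.Adj a b
  · rw [if_pos hab]
    rcases (R.adj_iff a b).1 hab with h | ⟨hb, h⟩ | ⟨ha, h⟩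
    · have hau := R.ne_root_of_cls_eq h.2 h.1
      have hbu := R.ne_root_of_cls_eq h.2.symm h.1.symm
      have hyy : y a * y b = x a * x b := by rw [hyx hau, hyx hbu]
      rw [if_pos h, hyy]
      linarith
    · have hxy : x a * y b = x a * x b := by rw [hyx hb]
      rw [if_pos h, hxy]
      linarith
    · have hxy : x b * y a = x a * x b := by rw [hyx ha, mul_comm]
      rw [if_pos h, hxy]
      linarith
  · rw [if_neg hab]
    positivity

end Windmill

section Extremal

open SimpleGraph
open scoped Finset Matrix

variable {V ι : Type*} [Fintype V] {u : V} {x : V → ℝ}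

lemma sum_sum_eq_pairSum_add (c : V → ι) (p : V → V) (x y : V → ℝ) :
    ∑ a, ∑ b, ((if a ≠ b ∧ c a = c b then y a * y b else 0) + (if p b = a then x a * y b else 0) +
      if p a = b then x b * y a else 0) = pairSum c y + 2 * ∑ b, x (p b) * y b := by
  have hleft : ∑ a, ∑ b, (if p b = a then x a * y b else 0) = ∑ b, x (p b) * y b := by
    rw [Finset.sum_comm]
    simp
  have hright : ∑ a, ∑ b, (if p a = b then x b * y a else 0) = ∑ b, x (p b) * y b := by
    simp
  simp only [Finset.sum_add_distrib]
  rw [hleft, hright, pairSum]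
  ring

lemma adjForm_windmill (c : V → ι) (x : V → ℝ) :
    adjForm (windmill u c) x = pairSum c (Function.update x u 0) +
      2 * ∑ b, x u * Function.update x u 0 b := by
  rw [adjForm_eq_sum, ← sum_sum_eq_pairSum_add c (fun _ => u)]
  refine Finset.sum_congr rfl fun a _ => Finset.sum_congr rfl fun b _ => ?_
  by_cases ha : a = u <;> by_cases hb : b = u
  · simp [ha, hb]
  · simp [windmill_adj, ha, hb, Ne.symm hb]
  · simp [windmill_adj, ha, hb, Ne.symm ha, mul_comm]
  · simp [windmill_adj, ha, hb, Ne.symm ha, Ne.symm hb]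

namespace RootedCliqueDecomposition

variable {G : SimpleGraph V} (R : RootedCliqueDecomposition G u)

lemma adjForm_le_adjForm_windmill (hx : ∀ v, 0 ≤ x v) (hmax : ∀ v, x v ≤ x u) :
    adjForm G x ≤ adjForm (windmill u R.cls) x := by
  calc adjForm G x
      ≤ pairSum R.cls (Function.update x u 0) +
          2 * ∑ b, x (R.par b) * Function.update x u 0 b := by
        rw [adjForm_eq_sum, ← sum_sum_eq_pairSum_add]
        exact Finset.sum_le_sum fun a _ => Finset.sum_le_sum fun b _ => R.ite_adj_le hx rfl a b
    _ ≤ pairSum R.cls (Function.update x u 0) + 2 * ∑ b, x u * Function.update x u 0 b := by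
        gcongr with b
        · by_cases hb : b = u
          · simp [hb]
          · simpa [hb] using hx b
        · exact hmax _
    _ = adjForm (windmill u R.cls) x := (adjForm_windmill _ _).symm

end RootedCliqueDecomposition

lemma exists_hasPairFibers_adjForm_le [Finite ι] {c : V → ι}
    (htwin : ∀ a ≠ u, ∃ b ≠ a, b ≠ u ∧ c b = c a) {m : ℕ}
    (hm : m < #((Finset.univ.erase u).image c)) (hx : ∀ v, 0 < x v) :
    ∃ c' : V → Option (Fin m), HasPairFibers u c' ∧
      adjForm (windmill u c) x ≤ adjForm (windmill u c') x ∧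
      (adjForm (windmill u c) x = adjForm (windmill u c') x → windmill u c = windmill u c') := by
  have : Nonempty ι := ⟨c u⟩
  have hypos {v : V} (hv : v ≠ u) : 0 < Function.update x u 0 v := by simpa [hv] using hx v
  have hy (v : V) : 0 ≤ Function.update x u 0 v := by
    by_cases hv : v = u
    · simp [hv]
    · exact (hypos hv).le
  obtain ⟨i₀, hi₀⟩ := Finite.exists_max (classWeight c (Function.update x u 0))
  obtain ⟨c', e, hc', hmove⟩ := exists_hasPairFibers htwin hm i₀
  have hrelabel : windmill u c' = windmill u (e ∘ c') :=
    windmill_congr fun a _ b _ => e.injective.eq_iff.symm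
  refine ⟨c', hc', ?_, fun heq => ?_⟩
  · rw [hrelabel, adjForm_windmill, adjForm_windmill]
    gcongr
    exact pairSum_le_of_moved hy hmove hi₀
  · rw [hrelabel, adjForm_windmill, adjForm_windmill, add_left_inj] at heq
    rw [hrelabel]
    refine windmill_congr fun a ha b hb => ?_
    have hfix {v : V} (hv : v ≠ u) : (e ∘ c') v = c v :=
      eq_of_pairSum_eq_of_moved hy hmove hi₀ heq (hypos hv)
    rw [hfix ha, hfix hb]

theorem specRad_le_extremal_cliqueTree_general {G : SimpleGraph V} (hG : G.IsCliqueTree)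
    (hsize : ∀ B : Set V, G.IsBlock B → 3 ≤ B.ncard) {k : ℕ} (hk : k < Fintype.card V)
    (hZ : G.zeroForcingNumber ≤ k) :
    G.specRad ≤ (calG (Fintype.card V) k).specRad ∧
      (G.specRad = (calG (Fintype.card V) k).specRad ↔
        Nonempty (G ≃g calG (Fintype.card V) k)) := by
  have := hG.1.nonempty
  obtain ⟨x, hx, hxG⟩ := exists_pos_eigenvector hG.1
  have hx0 : x ≠ 0 := fun h => (hx (Classical.arbitrary V)).ne' (congrFun h _)
  obtain ⟨u, hu⟩ := Finite.exists_max x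
  obtain ⟨R⟩ := nonempty_rootedCliqueDecomposition hG hsize u
  have hclasses := R.card_le_zeroForcingNumber_add_card_classes
  have hpairs := R.two_mul_card_classes_lt
  obtain ⟨c, hc, hle, heq⟩ := exists_hasPairFibers_adjForm_le (m := Fintype.card V - k - 1)
    (fun _ => R.exists_twin_ne_root) (show _ < #R.classes by omega) hx
  obtain ⟨e⟩ := hc.nonempty_windmill_iso_calG (by omega)
  have hform := (R.adjForm_le_adjForm_windmill (fun v => (hx v).le) hu).trans hle
  rw [← specRad_congr e]
  refine ⟨specRad_le_of_adjForm_le hx0 hxG hform, fun h => ?_, fun ⟨f⟩ => ?_⟩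
  · have hmul := mulVec_eq_of_specRad_eq hxG hform h
    have hstar : ∀ v ≠ u, G.Adj u v := fun v hv =>
      adj_of_mulVec_apply_eq hx (fun w hw => windmill_adj.2 ⟨hw.ne, Or.inl rfl⟩) (congrFun hmul u)
        (windmill_adj.2 ⟨hv.symm, Or.inl rfl⟩)
    have hGR := R.eq_windmill hstar
    have hGc : G = windmill u c := hGR.trans <| heq <| by
      rw [← hGR, adjForm, adjForm, hmul]
    rw [hGc]
    exact ⟨e⟩
  · rw [specRad_congr e, specRad_congr f]

end Extremal

/-- **Main theorem.** Let `⌊n/2⌋ + 1 ≤ k ≤ n − 1` and let `G` be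
any clique tree on `n` vertices with zero forcing number `k` in which every
block has at least 3 vertices.  Then `ρ(G) ≤ ρ(𝒢(n,k))`, with equality iff
`G ≅ 𝒢(n,k)`. -/
theorem specRad_le_extremal_cliqueTree {V : Type*} [Fintype V]
    (n k : ℕ) (hk1 : n / 2 + 1 ≤ k) (hk2 : k ≤ n - 1)
    (hn : Fintype.card V = n)
    (G : SimpleGraph V) (hG : G.IsCliqueTree)
    (hsize : ∀ B : Set V, G.IsBlock B → 3 ≤ B.ncard)
    (hZ : G.zeroForcingNumber = k) :
    G.specRad ≤ (calG n k).specRad ∧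
      (G.specRad = (calG n k).specRad ↔ Nonempty (G ≃g calG n k)) := by
  subst hn
  exact specRad_le_extremal_cliqueTree_general hG hsize (by omega) hZ.le
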